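/- Let G be a bipartite graph with parts U, U' of size n, minimum degree at least t-1, and suppose there exist sets A₀ ⊆ U, A₀' ⊆ U' and vertices u₀ ∈ A₀, u₀' ∈ A₀' with N(u₀) ⊆ A₀' and N(u₀') ⊆ A₀, and suppose G is K_{s,t}-saturated. If e denotes the number of edges between A₀ and A₀', and A ⊇ A₀, A' ⊇ A₀' are obtained by iteratively adding vertices with at least t-1 neighbors in the current set, then G has at least n(s+t-2) - (|A₀|+|A₀'|)(t-1) - ⌊(s-1)²/4⌋ + e + min{(t-s)|A|, (t-s)|A'|} edges. -/

import Mathlib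

open Finset

/-- The bipartite graph (with parts indexed by `Fin n`) whose edge set is `E`
contains a complete bipartite graph with `a` vertices on the left and `b` on the right. -/
def containsK {n : ℕ} (E : Finset (Fin n × Fin n)) (a b : ℕ) : Prop :=
  ∃ S T : Finset (Fin n), S.card = a ∧ T.card = b ∧ ∀ u ∈ S, ∀ v ∈ T, (u, v) ∈ E

/-- `E` is (unordered) `K_{s,t}`-saturated: no copy of `K_{s,t}` in either orientation,
and adding any missing edge creates one. -/
def Saturated {n : ℕ} (s t : ℕ) (E : Finset (Fin n × Fin n)) : Prop :=
  ¬ (containsK E s t ∨ containsK E t s) ∧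
    ∀ u v : Fin n, (u, v) ∉ E →
      (containsK (insert (u, v) E) s t ∨ containsK (insert (u, v) E) t s)

/-- Degree of a left vertex. -/
def degL {n : ℕ} (E : Finset (Fin n × Fin n)) (u : Fin n) : ℕ :=
  (E.filter fun p => p.1 = u).card

/-- Degree of a right vertex. -/
def degR {n : ℕ} (E : Finset (Fin n × Fin n)) (v : Fin n) : ℕ :=
  (E.filter fun p => p.2 = v).card

/-!
Write `k = s - 1` and `d = t - 1`. Each vertex added while building the shell brings `d` new edges,
which counts the edges between `A` and `A'`. For the other edges, every vertex of `Aᶜ` is owed `k`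
of them and every vertex of `A'ᶜ` is owed `d` (or the other way round).

Let `P` and `P'` consist of `A` and `A'` and the vertices with `k` neighbours in the opposite one.
A vertex of `P \ A` is paid by its edges to `A'`. A vertex outside `A'` with `d` neighbours in `P`
is paid by those edges, so its edges to `Pᶜ` are free to pay the vertices there; saturation at
the missing edges to `u₀` shows that every vertex outside `P'` is of this kind. The vertices of `Pᶜ`
still in deficit, and their counterparts in `P'ᶜ`, are joined completely to each other, again by
saturation. If there are `y` and `y'` of them, the total deficit is at most `y (k - y')`, and
`y' (k - y)` with the roles of the sides exchanged; the smaller is at most `k² / 4`.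
-/

open Function (swap)
open Rel (interedges)

section Interedges

variable {α β : Type*} (r : α → β → Prop) [DecidableRel r]

theorem card_interedges_eq_sum (X : Finset α) (Y : Finset β) :
    #(interedges r X Y) = ∑ u ∈ X, #(Y.bipartiteAbove r u) := by
  simp only [interedges, bipartiteAbove, card_filter, sum_product]

theorem card_interedges_swap (X : Finset α) (Y : Finset β) :
    #(interedges (swap r) Y X) = #(interedges r X Y) := by
  rw [card_interedges_eq_sum, card_interedges_eq_sum,
    sum_card_bipartiteAbove_eq_sum_card_bipartiteBelow]
  rfl

theorem card_interedges_sdiff_add_left [DecidableEq α] {X X' : Finset α} (h : X' ⊆ X)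
    (Y : Finset β) : #(interedges r (X \ X') Y) + #(interedges r X' Y) = #(interedges r X Y) := by
  simp only [card_interedges_eq_sum, sum_sdiff h]

theorem card_interedges_sdiff_add_right [DecidableEq β] (X : Finset α) {Y Y' : Finset β}
    (h : Y' ⊆ Y) : #(interedges r X (Y \ Y')) + #(interedges r X Y') = #(interedges r X Y) := by
  simpa only [card_interedges_swap] using card_interedges_sdiff_add_left (swap r) h X

theorem card_interedges_insert_left [DecidableEq α] {u : α} {X : Finset α} (hu : u ∉ X)
    (Y : Finset β) :
    #(interedges r (insert u X) Y) = #(Y.bipartiteAbove r u) + #(interedges r X Y) := by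
  simp only [card_interedges_eq_sum, sum_insert hu]

theorem card_interedges_insert_right [DecidableEq β] (X : Finset α) {v : β} {Y : Finset β}
    (hv : v ∉ Y) :
    #(interedges r X (insert v Y)) = #(X.bipartiteBelow r v) + #(interedges r X Y) := by
  simpa only [card_interedges_swap, bipartiteAbove_swap] using
    card_interedges_insert_left (swap r) hv X

variable {r}

theorem mul_card_le_card_interedges {d : ℕ} {X : Finset α} {Y : Finset β}
    (h : ∀ u ∈ X, d ≤ #(Y.bipartiteAbove r u)) : d * #X ≤ #(interedges r X Y) := by
  rw [card_interedges_eq_sum, mul_comm]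
  exact card_nsmul_le_sum X _ d h

theorem card_le_card_bipartiteAbove {T Y : Finset β} {u : α} (hTY : T ⊆ Y)
    (hT : ∀ v ∈ T, r u v) : #T ≤ #(Y.bipartiteAbove r u) :=
  card_le_card fun v hv => (mem_bipartiteAbove r).2 ⟨hTY hv, hT v hv⟩

theorem card_bipartiteAbove_mono {Y Y' : Finset β} (h : Y ⊆ Y') (u : α) :
    #(Y.bipartiteAbove r u) ≤ #(Y'.bipartiteAbove r u) :=
  card_le_card (filter_subset_filter _ h)

end Interedges

section Shell

variable {α β : Type*} {r : α → β → Prop} [DecidableRel r] {d : ℕ}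

/-- A pair of vertex sets is closed if every vertex outside has fewer than `d` neighbours in the
opposite set. The paper has `d = t - 1`. -/
structure IsClosedPair (r : α → β → Prop) [DecidableRel r] (d : ℕ) (D : Finset α)
    (D' : Finset β) : Prop where
  left : ∀ u ∉ D, #(D'.bipartiteAbove r u) < d
  right : ∀ v ∉ D', #(D.bipartiteBelow r v) < d

protected theorem IsClosedPair.swap {D : Finset α} {D' : Finset β} (h : IsClosedPair r d D D') :
    IsClosedPair (swap r) d D' D :=
  ⟨h.right, h.left⟩

theorem IsClosedPair.mem_left {A : Finset α} {D' A' : Finset β} (h : IsClosedPair r d A A')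
    (hD' : D' ⊆ A') {u : α} (hu : d ≤ #(D'.bipartiteAbove r u)) : u ∈ A := by
  by_contra huA
  exact (hu.trans (card_bipartiteAbove_mono hD' u)).not_gt (h.left u huA)

theorem IsClosedPair.mem_right {D A : Finset α} {A' : Finset β} (h : IsClosedPair r d A A')
    (hD : D ⊆ A) {v : β} (hv : d ≤ #(D.bipartiteBelow r v)) : v ∈ A' :=
  h.swap.mem_left hD hv

/-- The shell `A ∪ A'` of `A₀ ∪ A₀'`: the least closed pair containing `(A₀, A₀')`. -/
def IsShell (r : α → β → Prop) [DecidableRel r] (d : ℕ) (A₀ : Finset α) (A₀' : Finset β)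
    (A : Finset α) (A' : Finset β) : Prop :=
  IsLeast {D : Finset α × Finset β | (A₀, A₀') ≤ D ∧ IsClosedPair r d D.1 D.2} (A, A')

theorem IsShell.card_interedges_add_le {A₀ A : Finset α} {A₀' A' : Finset β}
    (h : IsShell r d A₀ A₀' A A') :
    #(interedges r A₀ A₀') + d * (#A + #A') ≤ #(interedges r A A') + d * (#A₀ + #A₀') := by
  classical
  -- A maximal pair below the shell satisfying the inequality is closed, as adding a vertex with `d`
  -- neighbours in the pair preserves the inequality; so it is the shell.
  obtain ⟨⟨hA₀, hclosed⟩, hleast⟩ := h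
  let good : Set (Finset α × Finset β) := {D | D ≤ (A, A') ∧
    #(interedges r A₀ A₀') + d * (#D.1 + #D.2) ≤ #(interedges r D.1 D.2) + d * (#A₀ + #A₀')}
  have hfinite : good.Finite := (Set.finite_Iic (A, A')).subset fun D hD => hD.1
  obtain ⟨⟨D, D'⟩, hD₀, hD⟩ := hfinite.exists_le_maximal (a := (A₀, A₀')) ⟨hA₀, le_rfl⟩
  obtain ⟨⟨hDA, hDA'⟩, hcard⟩ := hD.prop
  have hDclosed : IsClosedPair r d D D' := by
    refine ⟨fun u hu => ?_, fun v hv => ?_⟩ <;> by_contra! hdeg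
    · have hgood : (insert u D, D') ∈ good := by
        refine ⟨⟨insert_subset (hclosed.mem_left hDA' hdeg) hDA, hDA'⟩, ?_⟩
        rw [card_interedges_insert_left r hu, card_insert_of_notMem hu]
        linarith
      exact hu ((hD.le_of_ge hgood ⟨subset_insert u D, le_rfl⟩).1 (mem_insert_self u D))
    · have hgood : (D, insert v D') ∈ good := by
        refine ⟨⟨hDA, insert_subset (hclosed.mem_right hDA hdeg) hDA'⟩, ?_⟩
        rw [card_interedges_insert_right r D hv, card_insert_of_notMem hv]
        linarith
      exact hv ((hD.le_of_ge hgood ⟨le_rfl, subset_insert v D'⟩).2 (mem_insert_self v D'))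
  obtain ⟨hAD, hAD'⟩ := hleast ⟨hD₀, hDclosed⟩
  obtain rfl : D = A := hDA.antisymm hAD
  obtain rfl : D' = A' := hDA'.antisymm hAD'
  exact hcard

end Shell

section Thicken

variable {α β : Type*} [Fintype α] [DecidableEq α] (r : α → β → Prop) [DecidableRel r] (k d : ℕ)

/-- The set `A` together with all vertices having at least `k` neighbours in `B`. -/
def thicken (A : Finset α) (B : Finset β) : Finset α :=
  {u | u ∈ A ∨ k ≤ #(B.bipartiteAbove r u)}

variable {r k d}

theorem mem_thicken {A : Finset α} {B : Finset β} {u : α} :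
    u ∈ thicken r k A B ↔ u ∈ A ∨ k ≤ #(B.bipartiteAbove r u) :=
  mem_filter_univ u

theorem subset_thicken (A : Finset α) (B : Finset β) : A ⊆ thicken r k A B :=
  fun _ hu => mem_thicken.2 (.inl hu)

theorem le_card_bipartiteAbove_of_mem_thicken_sdiff {A : Finset α} {B : Finset β} {u : α}
    (hu : u ∈ thicken r k A B \ A) : k ≤ #(B.bipartiteAbove r u) := by
  rw [mem_sdiff, mem_thicken] at hu
  exact hu.1.resolve_left hu.2

theorem mul_card_compl_add_card_interedges_le [Fintype β] [DecidableEq β]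
    (hdeg : ∀ u, d ≤ #(univ.bipartiteAbove r u)) (A : Finset α) (B : Finset β) :
    d * #Aᶜ + #(interedges r (thicken r d A B \ A) Bᶜ) ≤ #(interedges r Aᶜ univ) := by
  set W := thicken r d A B
  have hAW : Wᶜ ⊆ Aᶜ := compl_subset_compl.2 (subset_thicken A B)
  have hWA : Aᶜ \ Wᶜ = W \ A := by rw [compl_sdiff_compl]
  have outside_edges : d * #Wᶜ ≤ #(interedges r Wᶜ univ) :=
    mul_card_le_card_interedges fun u _ => hdeg u
  have edges_to_B : d * #(W \ A) ≤ #(interedges r (W \ A) B) :=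
    mul_card_le_card_interedges fun u => le_card_bipartiteAbove_of_mem_thicken_sdiff
  have split_univ := card_interedges_sdiff_add_right r (W \ A) (subset_univ B)
  have split_compl := card_interedges_sdiff_add_left r hAW univ
  have card_split := card_sdiff_add_card_eq_card hAW
  rw [hWA] at split_compl card_split
  rw [← compl_eq_univ_sdiff] at split_univ
  rw [← card_split, mul_add]
  omega

theorem mul_card_compl_le [DecidableEq β] (A : Finset α) {B W : Finset β} (hBW : B ⊆ W) :
    k * #Aᶜ ≤ #(interedges r Aᶜ B) + #(interedges r (thicken r k A B)ᶜ (W \ B)) +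
      ∑ u ∈ (thicken r k A B)ᶜ, (k - #(W.bipartiteAbove r u)) := by
  set P := thicken r k A B
  have hAP : Pᶜ ⊆ Aᶜ := compl_subset_compl.2 (subset_thicken A B)
  have hPA : Aᶜ \ Pᶜ = P \ A := by rw [compl_sdiff_compl]
  have edges_to_B : k * #(P \ A) ≤ #(interedges r (P \ A) B) :=
    mul_card_le_card_interedges fun u => le_card_bipartiteAbove_of_mem_thicken_sdiff
  have edges_to_W : k * #Pᶜ ≤
      #(interedges r Pᶜ W) + ∑ u ∈ Pᶜ, (k - #(W.bipartiteAbove r u)) := by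
    rw [card_interedges_eq_sum, ← sum_add_distrib, mul_comm]
    exact card_nsmul_le_sum _ _ k fun u _ => le_add_tsub
  have split_W := card_interedges_sdiff_add_right r Pᶜ hBW
  have split_compl := card_interedges_sdiff_add_left r hAP B
  have card_split := card_sdiff_add_card_eq_card hAP
  rw [hPA] at split_compl card_split
  rw [← card_split, mul_add]
  omega

end Thicken

section Deficient

variable {α β : Type*} [Fintype α] [Fintype β] [DecidableEq α] [DecidableEq β]
  (r : α → β → Prop) [DecidableRel r] (k d : ℕ)

/-- The set `A` together with all vertices having at least `d` neighbours in the thickening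
of `B`. -/
def anchored (A : Finset α) (B : Finset β) : Finset α :=
  thicken r d A (thicken (swap r) k B A)

/-- The vertices outside the thickening of `A` with fewer than `k` anchored neighbours: those whose
share `k` of the edge count is not covered. -/
def deficient (A : Finset α) (A' : Finset β) : Finset α :=
  {u ∈ (thicken r k A A')ᶜ | #((anchored (swap r) k d A' A).bipartiteAbove r u) < k}

variable {r k d} {A : Finset α} {A' : Finset β}

theorem card_interedges_add_mul_card_compl_le (hdeg : ∀ v, d ≤ #(univ.bipartiteBelow r v)) :
    #(interedges r A A') + (k * #Aᶜ + d * #A'ᶜ) ≤ #(interedges r univ univ) +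
      ∑ u ∈ (thicken r k A A')ᶜ, (k - #((anchored (swap r) k d A' A).bipartiteAbove r u)) := by
  set P := thicken r k A A'
  set W' := anchored (swap r) k d A' A
  have left_share : k * #Aᶜ ≤ #(interedges r Aᶜ A') + #(interedges r Pᶜ (W' \ A')) +
      ∑ u ∈ Pᶜ, (k - #(W'.bipartiteAbove r u)) :=
    mul_card_compl_le A (subset_thicken A' P)
  have right_share : d * #A'ᶜ + #(interedges (swap r) (W' \ A') Pᶜ) ≤
      #(interedges (swap r) A'ᶜ univ) :=
    mul_card_compl_add_card_interedges_le hdeg A' P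
  have split_right := card_interedges_sdiff_add_right r univ (subset_univ A')
  have split_left := card_interedges_sdiff_add_left r (subset_univ A) A'
  rw [← compl_eq_univ_sdiff] at split_left split_right
  rw [card_interedges_swap r Pᶜ, card_interedges_swap r univ] at right_share
  omega

theorem sum_sub_card_bipartiteAbove_le
    (hsub : (thicken (swap r) k A' A)ᶜ ⊆ anchored (swap r) k d A' A)
    (hadj : ∀ u ∈ deficient r k d A A', ∀ v ∈ deficient (swap r) k d A' A, r u v) :
    ∑ u ∈ (thicken r k A A')ᶜ, (k - #((anchored (swap r) k d A' A).bipartiteAbove r u)) ≤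
      #(deficient r k d A A') * (k - #(deficient (swap r) k d A' A)) := by
  have hzero : ∀ u ∈ (thicken r k A A')ᶜ, u ∉ deficient r k d A A' →
      k - #((anchored (swap r) k d A' A).bipartiteAbove r u) = 0 := by
    intro u hu hu'
    exact Nat.sub_eq_zero_of_le (not_lt.1 fun h => hu' (mem_filter.2 ⟨hu, h⟩))
  rw [← sum_subset (filter_subset _ _) hzero]
  refine sum_le_card_nsmul _ _ _ fun u hu => Nat.sub_le_sub_left ?_ k
  exact card_le_card_bipartiteAbove ((filter_subset _ _).trans hsub) (hadj u hu)

end Deficient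

section Semisaturated

variable {α β : Type*} {r : α → β → Prop} {k d : ℕ}

/-- Adding the edge `uv` creates a complete bipartite graph with `k + 1` vertices on the left and
`d + 1` on the right, two of which are `u` and `v`. -/
def CompletesBiclique (r : α → β → Prop) (k d : ℕ) (u : α) (v : β) : Prop :=
  ∃ (S : Finset α) (T : Finset β), #S = k ∧ #T = d ∧
    (∀ x ∈ S, ∀ y ∈ T, r x y) ∧ (∀ x ∈ S, r x v) ∧ ∀ y ∈ T, r u y

protected theorem CompletesBiclique.swap {u : α} {v : β} (h : CompletesBiclique r k d u v) :
    CompletesBiclique (swap r) d k v u := by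
  obtain ⟨S, T, hS, hT, hST, hSv, huT⟩ := h
  exact ⟨T, S, hT, hS, fun y hy x hx => hST x hx y hy, huT, hSv⟩

/-- `K_{s,t}`-semisaturation, in terms of `k = s - 1` and `d = t - 1`: adding any missing edge
creates a new copy of `K_{s,t}`, in either orientation, but copies may be present already. -/
def Semisaturated (r : α → β → Prop) (k d : ℕ) : Prop :=
  ∀ u v, ¬ r u v → CompletesBiclique r k d u v ∨ CompletesBiclique r d k u v

protected theorem Semisaturated.swap (h : Semisaturated r k d) : Semisaturated (swap r) k d :=
  fun v u hvu => (h u v hvu).symm.imp CompletesBiclique.swap CompletesBiclique.swap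

variable {A : Finset α} {A' : Finset β}
  [DecidableRel r] [Fintype α] [Fintype β] [DecidableEq α] [DecidableEq β]

-- Saturation at the non-edge `u v₀`: the left part of the biclique lies in `N(v₀) ⊆ A`.
theorem Semisaturated.compl_thicken_subset_anchored (hsat : Semisaturated r k d)
    (hclosed : IsClosedPair r d A A') {v₀ : β} (hv₀ : ∀ u, r u v₀ → u ∈ A) :
    (thicken r k A A')ᶜ ⊆ anchored r k d A A' := by
  intro u hu
  rw [mem_compl, mem_thicken, not_or, not_le] at hu
  obtain ⟨huA, hdeg⟩ := hu
  rw [anchored, mem_thicken]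
  right
  obtain ⟨S, T, hS, hT, hST, hSv₀, huT⟩ | ⟨S, T, hS, hT, hST, hSv₀, huT⟩ :=
    hsat u v₀ fun h => huA (hv₀ u h)
  all_goals
    have hST' : ∀ y ∈ T, #S ≤ #(A.bipartiteBelow r y) := fun y hy =>
      card_le_card_bipartiteAbove (r := swap r) (fun x hx => hv₀ x (hSv₀ x hx))
        (hST · · y hy)
  · rw [← hT]
    exact card_le_card_bipartiteAbove (fun y hy => mem_thicken.2 (.inr (hS ▸ hST' y hy))) huT
  · have hTA' : T ⊆ A' := by
      intro y hy
      by_contra hyA'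
      exact (hclosed.right y hyA').not_ge (hS ▸ hST' y hy)
    exact absurd (card_le_card_bipartiteAbove hTA' huT) (not_le.2 (hT ▸ hdeg))

-- An unanchored `w` has `k` neighbours in `A'`. The unanchored part of `T` avoids `A'` but lies in
-- the thickening of `A'`, where `w` has fewer than `d` neighbours.
theorem add_card_sdiff_anchored_lt
    (hsub : (thicken r k A A')ᶜ ⊆ anchored r k d A A')
    (hsub' : (thicken (swap r) k A' A)ᶜ ⊆ anchored (swap r) k d A' A)
    {w : α} (hw : w ∉ anchored r k d A A') {T : Finset β} (hT : ∀ y ∈ T, r w y) :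
    k + #(T \ anchored (swap r) k d A' A) < d := by
  set P' := thicken (swap r) k A' A with hP'
  set W' := anchored (swap r) k d A' A
  have hwP : w ∈ thicken r k A A' := by
    by_contra hwP
    exact hw (hsub (mem_compl.2 hwP))
  rw [anchored, mem_thicken, not_or, not_le, ← hP'] at hw
  obtain ⟨hwA, hwP'⟩ := hw
  have hwA' : k ≤ #(A'.bipartiteAbove r w) :=
    le_card_bipartiteAbove_of_mem_thicken_sdiff (mem_sdiff.2 ⟨hwP, hwA⟩)
  have hdisj : Disjoint (A'.bipartiteAbove r w) (T \ W') :=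
    disjoint_sdiff.mono ((filter_subset _ _).trans (subset_thicken A' _)) le_rfl
  have hTP' : T \ W' ⊆ P' := by
    intro y hy
    by_contra hyP'
    exact (mem_sdiff.1 hy).2 (hsub' (mem_compl.2 hyP'))
  have hunion : A'.bipartiteAbove r w ∪ T \ W' ⊆ P'.bipartiteAbove r w :=
    union_subset (filter_subset_filter _ (subset_thicken A' A)) fun y hy =>
      (mem_bipartiteAbove r).2 ⟨hTP' hy, hT y (mem_sdiff.1 hy).1⟩
  have hcard := card_le_card hunion
  rw [card_union_of_disjoint hdisj] at hcard
  omega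

theorem not_completesBiclique_of_mem_deficient
    (hsub : (thicken r k A A')ᶜ ⊆ anchored r k d A A')
    (hsub' : (thicken (swap r) k A' A)ᶜ ⊆ anchored (swap r) k d A' A)
    {u : α} {v : β} (hu : u ∈ deficient r k d A A') (hv : v ∈ deficient (swap r) k d A' A) :
    ¬ CompletesBiclique r k d u v := by
  rintro ⟨S, T, hS, hT, hST, hSv, huT⟩
  set W := anchored r k d A A'
  set W' := anchored (swap r) k d A' A
  have hudeg : #(W'.bipartiteAbove r u) < k := (mem_filter.1 hu).2
  have hvdeg : #(W.bipartiteBelow r v) < k := (mem_filter.1 hv).2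
  obtain ⟨w, hwS, hwW⟩ : ∃ w ∈ S, w ∉ W := by
    by_contra! hSW
    exact hvdeg.not_ge (hS ▸ card_le_card_bipartiteAbove (r := swap r) hSW hSv)
  have hTW' : #(T ∩ W') ≤ #(W'.bipartiteAbove r u) :=
    card_le_card_bipartiteAbove inter_subset_right fun y hy => huT y (mem_of_mem_inter_left hy)
  have hTsdiff : k + #(T \ W') < d := add_card_sdiff_anchored_lt hsub hsub' hwW (hST w hwS)
  have hTsplit := card_inter_add_card_sdiff T W'
  omega

theorem Semisaturated.adj_of_mem_deficient (hsat : Semisaturated r k d)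
    (hsub : (thicken r k A A')ᶜ ⊆ anchored r k d A A')
    (hsub' : (thicken (swap r) k A' A)ᶜ ⊆ anchored (swap r) k d A' A)
    {u : α} (hu : u ∈ deficient r k d A A') {v : β}
    (hv : v ∈ deficient (swap r) k d A' A) : r u v := by
  by_contra huv
  rcases hsat u v huv with h | h
  · exact not_completesBiclique_of_mem_deficient hsub hsub' hu hv h
  · exact not_completesBiclique_of_mem_deficient hsub' hsub hv hu h.swap

end Semisaturated

section EdgeBound

theorem mul_sub_le_sq_div_four {a b : ℕ} (k : ℕ) (hab : a ≤ b) : a * (k - b) ≤ k ^ 2 / 4 := by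
  rcases le_total k b with hkb | hbk
  · simp [Nat.sub_eq_zero_of_le hkb]
  · rw [Nat.le_div_iff_mul_le four_pos]
    calc a * (k - b) * 4 = 4 * a * (k - b) := by ring
      _ ≤ 4 * b * (k - b) := by gcongr
      _ ≤ (b + (k - b)) ^ 2 := four_mul_le_sq_add b (k - b)
      _ = k ^ 2 := by rw [Nat.add_sub_cancel' hbk]

variable {α β : Type*} [Fintype α] [Fintype β] {r : α → β → Prop} [DecidableRel r] {k d : ℕ}

theorem Semisaturated.card_interedges_add_min_le [DecidableEq α] [DecidableEq β]
    (hsat : Semisaturated r k d)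
    (hdeg : ∀ u, d ≤ #(univ.bipartiteAbove r u)) (hdeg' : ∀ v, d ≤ #(univ.bipartiteBelow r v))
    {A : Finset α} {A' : Finset β} (hclosed : IsClosedPair r d A A')
    {u₀ : α} (hu₀ : ∀ v, r u₀ v → v ∈ A') {v₀ : β} (hv₀ : ∀ u, r u v₀ → u ∈ A) :
    #(interedges r A A') + min (k * #Aᶜ + d * #A'ᶜ) (k * #A'ᶜ + d * #Aᶜ) ≤
      #(interedges r univ univ) + k ^ 2 / 4 := by
  have hsub := hsat.compl_thicken_subset_anchored hclosed hv₀
  have hsub' := hsat.swap.compl_thicken_subset_anchored hclosed.swap hu₀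
  have hadj : ∀ u ∈ deficient r k d A A', ∀ v ∈ deficient (swap r) k d A' A, r u v :=
    fun u hu v hv => hsat.adj_of_mem_deficient hsub hsub' hu hv
  have count := card_interedges_add_mul_card_compl_le (k := k) (A := A) (A' := A') hdeg'
  have count' := card_interedges_add_mul_card_compl_le (r := swap r) (k := k) (A := A')
    (A' := A) hdeg
  have deficit := sum_sub_card_bipartiteAbove_le hsub' hadj
  have deficit' := sum_sub_card_bipartiteAbove_le (r := swap r) hsub
    fun v hv u hu => hadj u hu v hv
  rw [card_interedges_swap r A, card_interedges_swap r univ] at count'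
  rcases le_total #(deficient r k d A A') #(deficient (swap r) k d A' A) with h | h
  · grw [min_le_left, count, deficit, mul_sub_le_sq_div_four k h]
  · grw [min_le_right, count', deficit', mul_sub_le_sq_div_four k h]

theorem stmt9_general (hsat : Semisaturated r k d)
    (hdeg : ∀ u, d ≤ #(univ.bipartiteAbove r u)) (hdeg' : ∀ v, d ≤ #(univ.bipartiteBelow r v))
    {A₀ A : Finset α} {A₀' A' : Finset β} (hshell : IsShell r d A₀ A₀' A A')
    {u₀ : α} (hu₀ : ∀ v, r u₀ v → v ∈ A') {v₀ : β} (hv₀ : ∀ u, r u v₀ → u ∈ A) :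
    min ((k : ℤ) * Fintype.card α + d * Fintype.card β + (d - k) * #A)
        ((k : ℤ) * Fintype.card β + d * Fintype.card α + (d - k) * #A')
      - (#A₀ + #A₀' : ℕ) * d - (k ^ 2 / 4 : ℕ) + #(interedges r A₀ A₀')
      ≤ #(interedges r univ univ) := by
  classical
  have inside := hshell.card_interedges_add_le
  have outside := hsat.card_interedges_add_min_le hdeg hdeg' hshell.1.2 hu₀ hv₀
  rw [← card_add_card_compl A, ← card_add_card_compl A']
  generalize k ^ 2 / 4 = q at *
  zify at inside outside ⊢
  rcases min_choice ((k : ℤ) * #Aᶜ + d * #A'ᶜ) (k * #A'ᶜ + d * #Aᶜ) with h | h <;>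
    rw [h] at outside
  · grw [min_le_left]
    linarith
  · grw [min_le_right]
    linarith

end EdgeBound

section EdgeFinset

variable {n : ℕ} (E : Finset (Fin n × Fin n))

theorem interedges_mem_eq_filter (X Y : Finset (Fin n)) :
    interedges (fun u v => (u, v) ∈ E) X Y = {p ∈ E | p.1 ∈ X ∧ p.2 ∈ Y} := by
  ext p
  simp only [Rel.mem_interedges_iff, mem_filter]
  tauto

theorem degL_eq_card_bipartiteAbove (u : Fin n) :
    degL E u = #(univ.bipartiteAbove (fun u v => (u, v) ∈ E) u) := by
  have h := card_interedges_eq_sum (fun u v => (u, v) ∈ E) {u} univ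
  rw [interedges_mem_eq_filter, sum_singleton] at h
  simpa [degL] using h

theorem degR_eq_card_bipartiteBelow (v : Fin n) :
    degR E v = #(univ.bipartiteBelow (fun u v => (u, v) ∈ E) v) := by
  have h := card_interedges_eq_sum (swap fun u v => (u, v) ∈ E) {v} univ
  rw [card_interedges_swap, interedges_mem_eq_filter, sum_singleton] at h
  simpa [degR, bipartiteAbove_swap] using h

variable {E}

theorem completesBiclique_of_containsK_insert {a b : ℕ} (hE : ¬ containsK E a b) {u v : Fin n}
    (h : containsK (insert (u, v) E) a b) :
    CompletesBiclique (fun u v => (u, v) ∈ E) (a - 1) (b - 1) u v := by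
  obtain ⟨S, T, hS, hT, hST⟩ := h
  have hne : ∀ x ∈ S, ∀ y ∈ T, (x ≠ u ∨ y ≠ v) → (x, y) ∈ E := by
    intro x hx y hy hxy
    refine (mem_insert.1 (hST x hx y hy)).resolve_left fun h => ?_
    rw [Prod.mk.injEq] at h
    tauto
  have hu : u ∈ S := by
    by_contra hu
    exact hE ⟨S, T, hS, hT, fun x hx y hy => hne x hx y hy (.inl (ne_of_mem_of_not_mem hx hu))⟩
  have hv : v ∈ T := by
    by_contra hv
    exact hE ⟨S, T, hS, hT, fun x hx y hy => hne x hx y hy (.inr (ne_of_mem_of_not_mem hy hv))⟩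
  refine ⟨S.erase u, T.erase v, by rw [card_erase_of_mem hu, hS],
    by rw [card_erase_of_mem hv, hT], fun x hx y hy => ?_, fun x hx => ?_, fun y hy => ?_⟩
  · exact hne x (mem_of_mem_erase hx) y (mem_of_mem_erase hy) (.inl (ne_of_mem_erase hx))
  · exact hne x (mem_of_mem_erase hx) v hv (.inl (ne_of_mem_erase hx))
  · exact hne u hu y (mem_of_mem_erase hy) (.inr (ne_of_mem_erase hy))

theorem Saturated.semisaturated {s t : ℕ} (h : Saturated s t E) :
    Semisaturated (fun u v => (u, v) ∈ E) (s - 1) (t - 1) := by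
  obtain ⟨hfree, hadd⟩ := h
  rw [not_or] at hfree
  exact fun u v huv => (hadd u v huv).imp (completesBiclique_of_containsK_insert hfree.1)
    (completesBiclique_of_containsK_insert hfree.2)

end EdgeFinset

theorem pred_mul_add_pred_mul_eq {s t : ℕ} (hs : 1 ≤ s) (hst : s ≤ t) (n a : ℕ) :
    ((s - 1 : ℕ) : ℤ) * n + (t - 1 : ℕ) * n + (((t - 1 : ℕ) : ℤ) - (s - 1 : ℕ)) * a =
      n * (s + t - 2 : ℕ) + ((t - s) * a : ℕ) := by
  rw [show s + t - 2 = (s - 1) + (t - 1) by omega, show t - s = (t - 1) - (s - 1) by omega,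
    Nat.cast_mul, Nat.cast_sub (Nat.sub_le_sub_right hst 1)]
  push_cast
  ring

theorem stmt9 (n s t : ℕ) (hs : 1 ≤ s) (hst : s ≤ t) (htn : t ≤ n)
    (E : Finset (Fin n × Fin n)) (hsat : Saturated s t E)
    (hminL : ∀ u : Fin n, t - 1 ≤ degL E u) (hminR : ∀ v : Fin n, t - 1 ≤ degR E v)
    (A₀ A₀' : Finset (Fin n)) (u₀ u₀' : Fin n)
    (hu₀ : u₀ ∈ A₀) (hu₀' : u₀' ∈ A₀')
    (hN₀ : ∀ v : Fin n, (u₀, v) ∈ E → v ∈ A₀')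
    (hN₀' : ∀ u : Fin n, (u, u₀') ∈ E → u ∈ A₀)
    (A A' : Finset (Fin n)) (hA₀A : A₀ ⊆ A) (hA₀'A' : A₀' ⊆ A')
    (hclosedL : ∀ u : Fin n, u ∉ A → (A'.filter fun v => (u, v) ∈ E).card < t - 1)
    (hclosedR : ∀ v : Fin n, v ∉ A' → (A.filter fun u => (u, v) ∈ E).card < t - 1)
    (hmin : ∀ D D' : Finset (Fin n), A₀ ⊆ D → A₀' ⊆ D' →
      (∀ u : Fin n, u ∉ D → (D'.filter fun v => (u, v) ∈ E).card < t - 1) →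
      (∀ v : Fin n, v ∉ D' → (D.filter fun u => (u, v) ∈ E).card < t - 1) →
      A ⊆ D ∧ A' ⊆ D') :
    (n : ℤ) * (s + t - 2 : ℕ) - ((A₀.card + A₀'.card : ℕ) : ℤ) * ((t - 1 : ℕ) : ℤ)
        - (((s - 1) ^ 2 / 4 : ℕ) : ℤ)
        + ((E.filter fun p => p.1 ∈ A₀ ∧ p.2 ∈ A₀').card : ℤ)
        + min (((t - s) * A.card : ℕ) : ℤ) (((t - s) * A'.card : ℕ) : ℤ)
      ≤ (E.card : ℤ) := by
  have bound := stmt9_general hsat.semisaturated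
    (fun u => (hminL u).trans_eq (degL_eq_card_bipartiteAbove E u))
    (fun v => (hminR v).trans_eq (degR_eq_card_bipartiteBelow E v))
    ⟨⟨⟨hA₀A, hA₀'A'⟩, hclosedL, hclosedR⟩,
      fun D ⟨hD₀, hD⟩ => hmin D.1 D.2 hD₀.1 hD₀.2 hD.left hD.right⟩
    (fun v hv => hA₀'A' (hN₀ v hv)) (fun u hu => hA₀A (hN₀' u hu))
  simp only [interedges_mem_eq_filter, mem_univ, and_self, filter_true, Fintype.card_fin] at bound
  rw [pred_mul_add_pred_mul_eq hs hst, pred_mul_add_pred_mul_eq hs hst, min_add_add_left] at bound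
  linarith
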